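/- Let m, K ≥ 1, let C ∈ ℝ^{m×K} be a cost matrix, let ε > 0, and set μ = (1/m)·1_m. Then the matrix T* with entries T*_{ij} = (1/m)·exp(−C_{ij}/ε) / Σ_{k=1}^K exp(−C_{ik}/ε) is the unique minimizer of the objective ⟨C, T⟩ − ε·H(T) over the set U(μ) = { T ∈ ℝ_{+}^{m×K} : T·1_K = μ }. -/

import Mathlib

open Finset

/-- The candidate optimal entropic transport plan
`T*_{ij} = (1/m)·exp(-C_{ij}/ε) / Σ_k exp(-C_{ik}/ε)`. -/
noncomputable def Tstar (m K : ℕ) (C : Fin m → Fin K → ℝ) (ε : ℝ) :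
    Fin m → Fin K → ℝ :=
  fun i j => (1 / (m : ℝ)) * Real.exp (-C i j / ε) / ∑ k, Real.exp (-C i k / ε)

/-- The entropic optimal transport objective `⟨C, T⟩ - ε·H(T)`, where
`H(T) = Σ_{ij} (1 - log T_{ij})·T_{ij}` (with `0·(1 - log 0) = 0` via `Real.log 0 = 0`). -/
noncomputable def entObj (m K : ℕ) (C : Fin m → Fin K → ℝ) (ε : ℝ)
    (T : Fin m → Fin K → ℝ) : ℝ :=
  (∑ i, ∑ j, C i j * T i j) - ε * ∑ i, ∑ j, (1 - Real.log (T i j)) * T i j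

open InformationTheory in
lemma mul_klFun_div {t q : ℝ} (hq : 0 < q) :
    q * klFun (t / q) = t * Real.log t - t * Real.log q + q - t := by
  rcases eq_or_ne t 0 with rfl | ht
  · simp [klFun_zero]
  · rw [klFun_apply, Real.log_div ht hq.ne']
    field_simp

section Tstar

variable {m K : ℕ} {C : Fin m → Fin K → ℝ} {ε : ℝ}

lemma sum_exp_pos (hK : 1 ≤ K) (i : Fin m) : 0 < ∑ k, Real.exp (-C i k / ε) :=
  sum_pos (fun _ _ => Real.exp_pos _) ⟨⟨0, hK⟩, mem_univ _⟩

lemma Tstar_pos (hm : 1 ≤ m) (hK : 1 ≤ K) (i : Fin m) (j : Fin K) :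
    0 < Tstar m K C ε i j := by
  have hm' : (0 : ℝ) < m := by exact_mod_cast hm
  have hS := sum_exp_pos (C := C) (ε := ε) hK i
  unfold Tstar
  positivity

lemma sum_Tstar (hK : 1 ≤ K) (i : Fin m) : ∑ j, Tstar m K C ε i j = 1 / (m : ℝ) := by
  have hS := sum_exp_pos (C := C) (ε := ε) hK i
  simp only [Tstar]
  rw [← sum_div, ← mul_sum, mul_div_assoc, div_self hS.ne', mul_one]

lemma log_Tstar (hm : 1 ≤ m) (hK : 1 ≤ K) (i : Fin m) (j : Fin K) :
    Real.log (Tstar m K C ε i j) =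
      Real.log (1 / m) - C i j / ε - Real.log (∑ k, Real.exp (-C i k / ε)) := by
  have hm' : (1 / m : ℝ) ≠ 0 := by
    have : (0 : ℝ) < m := by exact_mod_cast hm
    positivity
  have hS := sum_exp_pos (C := C) (ε := ε) hK i
  rw [Tstar, Real.log_div (mul_ne_zero hm' (Real.exp_ne_zero _)) hS.ne',
    Real.log_mul hm' (Real.exp_ne_zero _), Real.log_exp]
  ring

open InformationTheory in
/-- On `U(μ)`, the objective is `ε` times the Kullback-Leibler divergence from `T*`,
up to a constant. -/
lemma entObj_eq_klFun_add_const (hm : 1 ≤ m) (hK : 1 ≤ K) (hε : ε ≠ 0)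
    {T : Fin m → Fin K → ℝ} (hT : ∀ i, ∑ j, T i j = 1 / (m : ℝ)) :
    entObj m K C ε T =
      ε * (∑ i, ∑ j, Tstar m K C ε i j * klFun (T i j / Tstar m K C ε i j)) +
      ε * ∑ i : Fin m, (Real.log (1 / m) -
        Real.log (∑ k, Real.exp (-C i k / ε)) - 1) * (1 / (m : ℝ)) := by
  simp only [entObj, mul_sum, ← sum_sub_distrib, ← sum_add_distrib]
  refine sum_congr rfl fun i _ => ?_
  have hsum : ∑ j, (T i j - Tstar m K C ε i j) = 0 := by
    rw [sum_sub_distrib, hT, sum_Tstar hK, sub_self]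
  have hlog := log_Tstar (C := C) (ε := ε) hm hK i
  generalize Real.log (∑ k, Real.exp (-C i k / ε)) = b at hlog ⊢
  generalize Real.log (1 / (m : ℝ)) = a at hlog ⊢
  rw [← hT i, mul_sum, mul_sum, ← sum_add_distrib, ← sub_eq_zero, ← sum_sub_distrib,
    ← mul_zero ε, ← hsum, mul_sum]
  refine sum_congr rfl fun j _ => ?_
  rw [mul_klFun_div (Tstar_pos hm hK i j), hlog j]
  field_simp
  ring

end Tstar

/-- `T*` is the unique minimizer of `⟨C, T⟩ - ε·H(T)` over
`U(μ) = {T ∈ ℝ₊^{m×K} : T·1_K = (1/m)·1_m}`. -/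
theorem stmt3 (m K : ℕ) (hm : 1 ≤ m) (hK : 1 ≤ K)
    (C : Fin m → Fin K → ℝ) (ε : ℝ) (hε : 0 < ε) :
    (∀ i j, 0 ≤ Tstar m K C ε i j) ∧
    (∀ i, ∑ j, Tstar m K C ε i j = 1 / (m : ℝ)) ∧
    (∀ T : Fin m → Fin K → ℝ,
      (∀ i j, 0 ≤ T i j) → (∀ i, ∑ j, T i j = 1 / (m : ℝ)) →
      T ≠ Tstar m K C ε →
      entObj m K C ε (Tstar m K C ε) < entObj m K C ε T) := by
  refine ⟨fun i j => (Tstar_pos hm hK i j).le, sum_Tstar hK, fun T hT0 hT hne => ?_⟩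
  have hq : ∀ i j, 0 < Tstar m K C ε i j := Tstar_pos hm hK
  rw [entObj_eq_klFun_add_const hm hK hε.ne' hT,
    entObj_eq_klFun_add_const hm hK hε.ne' (sum_Tstar hK)]
  simp only [div_self (hq _ _).ne', InformationTheory.klFun_one, mul_zero, sum_const_zero]
  obtain ⟨i, j, hij⟩ : ∃ i j, T i j ≠ Tstar m K C ε i j := by
    by_contra! h
    exact hne (funext₂ h)
  have hnonneg : ∀ i j, 0 ≤ Tstar m K C ε i j *
      InformationTheory.klFun (T i j / Tstar m K C ε i j) := fun i j =>
    mul_nonneg (hq i j).le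
      (InformationTheory.klFun_nonneg (div_nonneg (hT0 i j) (hq i j).le))
  have hpos : 0 < Tstar m K C ε i j *
      InformationTheory.klFun (T i j / Tstar m K C ε i j) := by
    refine (hnonneg i j).lt_of_ne' (mul_ne_zero (hq i j).ne' ?_)
    rw [Ne, InformationTheory.klFun_eq_zero_iff (div_nonneg (hT0 i j) (hq i j).le),
      div_eq_one_iff_eq (hq i j).ne']
    exact hij
  have hsum := sum_pos' (fun i _ => sum_nonneg fun j _ => hnonneg i j)
    ⟨i, mem_univ i, sum_pos' (fun j _ => hnonneg i j) ⟨j, mem_univ j, hpos⟩⟩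
  linarith [mul_pos hε hsum]
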